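/- For every j ∈ F_q*, P(j,0) = V(0)·V(j). -/

import Mathlib

/-!
Put `A = A₄`, `φ = A²`, and let `K = ∑ₓ A(x) ψ(x + a j⁴ / x)` be the Kloosterman sum in `V(j)`. For
`j ≠ 0` both Kronecker deltas in `P(j,0)` vanish, so
`G(φ) P(j,0) = ∑ₓ φ(a/x - x) ψ(j² (x + a/x))`. Here `φ(a/x - x) = A((x + a/x)² - 4a)` depends only
on `u = x + a/x`, and `u` arises from `1 + φ(u² - 4a)` values of `x`. As `Aφ = A⁻¹`,
`G(φ) P(j,0) = ∑ᵤ A(u² - 4a) ψ(j² u) + ∑ᵤ A⁻¹(u² - 4a) ψ(j² u)`.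

For any `χ ≠ 1`, expanding `χ⁻¹(u² - 4a)` through the Gauss sum of `χ` and completing the square in
`u` gives `G(χ) ∑ᵤ χ⁻¹(u² - 4a) ψ(cu) = G(φ) ∑_y (χφ)(y) ψ(-4ay - c²/(4y))`. For `χ = A` and
`c = j²` the last sum is `A⁻¹(-j⁴/4) K = K`, because `-4 = (1 + i)⁴` is a fourth power; for
`χ = A⁻¹` it is `A(a)⁻¹ K` by the symmetry `x ↦ a j⁴ / x`. Hence
`P(j,0) = (1 / G(A) + 1 / (A(a) G(A⁻¹))) K`, and `τ² = A(a) G(A) G(A⁻¹)` turns the first factor into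
`V(0) / τ`.
-/

open Finset

noncomputable section

variable {F : Type} [Field F] [Fintype F] [DecidableEq F]

/-- Katz's mixed character sum `P(j,k)`; the quadratic character `φ` is `A₄ ^ 2`. -/
def Pkatz (ψ : AddChar F ℂ) (A₄ : MulChar F ℂ) (a : F) (j k : F) : ℂ :=
  (if j = k then 1 else 0) + (A₄ ^ 2) (-1) * (if j = -k then 1 else 0) +
    (gaussSum (A₄ ^ 2) ψ)⁻¹ *
      ∑ x ∈ univ.filter (fun x : F => x ≠ 0),
        (A₄ ^ 2) (a / x - x) * ψ (x * (j + k) ^ 2 + (a / x) * (j - k) ^ 2)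

/-- Katz's sums `V(j)`. -/
def Vkatz (ψ : AddChar F ℂ) (A₄ : MulChar F ℂ) (a : F) (τ : ℂ) (j : F) : ℂ :=
  if j = 0 then gaussSum A₄ ψ / τ + τ / gaussSum A₄ ψ
  else τ⁻¹ * ∑ x ∈ univ.filter (fun x : F => x ≠ 0), A₄ x * ψ (x + a * j ^ 4 / x)

/-- The finite field hypergeometric function `₂F₁(A,B;C|x)`. -/
def hyp2F1 (A B C : MulChar F ℂ) (x : F) : ℂ :=
  ((1 : MulChar F ℂ) x / (Fintype.card F : ℂ)) *
    ∑ y : F, B y * (B⁻¹ * C) (y - 1) * A⁻¹ (1 - x * y)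

/-- The Jacobi sum `J(A,B)`. -/
def Jsum (A B : MulChar F ℂ) : ℂ := ∑ y : F, A y * B (1 - y)

/-- The sum `h(D,j)`; the quadratic character `φ` is `A₄ ^ 2`. -/
def hKatz (A₄ D : MulChar F ℂ) (j : F) : ℂ :=
  ∑ x ∈ univ.filter (fun x : F => x ≠ 0),
    D x * (A₄ ^ 2) (1 - x) * ((D⁻¹ ^ 2) * A₄ ^ 2) (x * (j + 1) ^ 2 + (j - 1) ^ 2)

/-- The sum `H(λ₁)`; the quadratic character `φ` is `A₄ ^ 2`. -/
def Hkatz (A₄ lam : MulChar F ℂ) (a : F) : ℂ :=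
  ∑ p ∈ (univ ×ˢ univ).filter
      (fun p : F × F => p.1 ≠ 0 ∧ p.2 ≠ 0 ∧
        p.2 * (p.1 + 1) ^ 2 + a * (p.1 - 1) ^ 2 / p.2 = 0),
    (lam ^ 2 * A₄ ^ 2) p.1 * (A₄ ^ 2) (p.2 - a / p.2)

/-- The Mellin transform `S(χ)` of the sums `V(j)`. -/
def Smel (ψ : AddChar F ℂ) (A₄ : MulChar F ℂ) (a : F) (τ : ℂ) (χ : MulChar F ℂ) : ℂ :=
  ∑ j ∈ univ.filter (fun j : F => j ≠ 0), χ j * Vkatz ψ A₄ a τ j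

/-- The Mellin transform `T(χ)` of the sums `P(j,0)`. -/
def Tmel (ψ : AddChar F ℂ) (A₄ : MulChar F ℂ) (a : F) (χ : MulChar F ℂ) : ℂ :=
  ∑ j ∈ univ.filter (fun j : F => j ≠ 0), χ j * Pkatz ψ A₄ a j 0

/-- The double Mellin transform `T(χ₁,χ₂)` of the sums `P(j,k)`. -/
def Tmel2 (ψ : AddChar F ℂ) (A₄ : MulChar F ℂ) (a : F) (χ₁ χ₂ : MulChar F ℂ) : ℂ :=
  ∑ j ∈ univ.filter (fun j : F => j ≠ 0), ∑ k ∈ univ.filter (fun k : F => k ≠ 0),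
    χ₁ j * χ₂ k * Pkatz ψ A₄ a j k

end

section OrderFour

lemma orderOf_sq_of_orderOf_eq_four {G : Type*} [Monoid G] {g : G} (hg : orderOf g = 4) :
    orderOf (g ^ 2) = 2 := by
  rw [orderOf_pow_of_dvd two_ne_zero (by rw [hg]; norm_num), hg]

lemma mul_sq_eq_inv_of_orderOf_eq_four {G : Type*} [Group G] {g : G} (hg : orderOf g = 4) :
    g * g ^ 2 = g⁻¹ :=
  eq_inv_of_mul_eq_one_left (by rw [← pow_succ', ← pow_succ, ← orderOf_dvd_iff_pow_eq_one, hg])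

end OrderFour

section QuadraticCharacter

lemma mulChar_apply_pow_eq_one {M R : Type*} [CommMonoid M] [CommMonoidWithZero R]
    {χ : MulChar M R} {n : ℕ} (hχ : χ ^ n = 1) {x : M} (hx : IsUnit x) : χ (x ^ n) = 1 := by
  lift x to Mˣ using hx
  rw [map_pow, ← MulChar.pow_apply_coe, hχ, MulChar.one_apply_coe]

variable {F R : Type*} [Field F] [CommRing R]

lemma ringChar_ne_two_of_mulChar_orderOf_eq_two [Finite F] {φ : MulChar F R}
    (hφ : orderOf φ = 2) : ringChar F ≠ 2 := by
  intro hF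
  refine mt orderOf_eq_one_iff.mpr (by simp [hφ]) (MulChar.ext (χ := φ) (χ' := 1) fun x => ?_)
  obtain ⟨y, hy⟩ := FiniteField.isSquare_of_char_two hF (x : F)
  have hy0 : y ≠ 0 := by
    rintro rfl
    exact x.ne_zero (hy.trans (mul_zero 0))
  rw [hy, ← sq, mulChar_apply_pow_eq_one (hφ ▸ pow_orderOf_eq_one φ) hy0.isUnit,
    MulChar.one_apply (pow_ne_zero 2 hy0).isUnit]

variable [Fintype F] [IsDomain R] {φ : MulChar F R}

lemma mulChar_eq_quadraticChar_of_orderOf_eq_two [DecidableEq F] (hφ : orderOf φ = 2) :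
    φ = (quadraticChar F).ringHomComp (Int.castRingHom R) := by
  obtain ⟨g, hg⟩ := IsCyclic.exists_generator (α := Fˣ)
  have hφ_sq : φ ^ 2 = 1 := hφ ▸ pow_orderOf_eq_one φ
  have hφg_ne : φ g ≠ 1 := by
    rw [← MulChar.one_apply_coe (R' := R) g, Ne, ← MulChar.eq_iff hg]
    exact mt orderOf_eq_one_iff.mpr (by simp [hφ])
  have hφg : φ g = -1 :=
    (sq_eq_one_iff.mp (by
      rw [← map_pow, mulChar_apply_pow_eq_one hφ_sq g.isUnit])).resolve_left hφg_ne
  have hg_nonsquare : ¬IsSquare (g : F) := by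
    rintro ⟨y, hy⟩
    have hy0 : y ≠ 0 := left_ne_zero_of_mul (hy ▸ g.ne_zero)
    exact hφg_ne (by rw [hy, ← sq, mulChar_apply_pow_eq_one hφ_sq hy0.isUnit])
  rw [MulChar.eq_iff hg, hφg, MulChar.ringHomComp_apply,
    quadraticChar_neg_one_iff_not_isSquare.mpr hg_nonsquare]
  simp

lemma card_sq_eq_of_orderOf_eq_two [DecidableEq F] (hφ : orderOf φ = 2) (t : F) :
    (#{x : F | x ^ 2 = t} : R) = 1 + φ t := by
  have h := quadraticChar_card_sqrts (ringChar_ne_two_of_mulChar_orderOf_eq_two hφ) t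
  rw [Set.toFinset_ofPred] at h
  rw [mulChar_eq_quadraticChar_of_orderOf_eq_two hφ, MulChar.ringHomComp_apply, eq_intCast,
    add_comm]
  exact_mod_cast congrArg (Int.cast : ℤ → R) h

lemma sum_comp_sq (hφ : orderOf φ = 2) (f : F → R) :
    ∑ x, f (x ^ 2) = ∑ t, (1 + φ t) * f t := by
  classical
  rw [← sum_fiberwise' univ (· ^ 2)]
  simp only [sum_const, nsmul_eq_mul, card_sq_eq_of_orderOf_eq_two hφ]

lemma card_add_div_eq_of_orderOf_eq_two [DecidableEq F] (hφ : orderOf φ = 2) {a : F} (ha : a ≠ 0)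
    (u : F) : (#{x : F | x ≠ 0 ∧ x + a / x = u} : R) = 1 + φ (u ^ 2 - 4 * a) := by
  have h2 : (2 : F) ≠ 0 := Ring.two_ne_zero (ringChar_ne_two_of_mulChar_orderOf_eq_two hφ)
  have : NeZero (2 : F) := ⟨h2⟩
  have hroot (x : F) : x ≠ 0 ∧ x + a / x = u ↔ (2 * x - u) ^ 2 = u ^ 2 - 4 * a := by
    calc x ≠ 0 ∧ x + a / x = u
        ↔ 1 * (x * x) + -u * x + a = 0 := by
          constructor
          · rintro ⟨hx, rfl⟩
            field_simp
            ring
          · intro h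
            have hx : x ≠ 0 := by
              rintro rfl
              exact ha (by simpa using h)
            refine ⟨hx, ?_⟩
            field_simp
            linear_combination h
      _ ↔ (2 * x - u) ^ 2 = u ^ 2 - 4 * a := by
          rw [quadratic_eq_zero_iff_discrim_eq_sq one_ne_zero, discrim, eq_comm]
          ring_nf
  rw [← card_sq_eq_of_orderOf_eq_two hφ]
  congr 1
  refine card_nbij' (2 * · - u) (fun w => (w + u) / 2) ?_ ?_ ?_ ?_
  · intro x hx
    simpa [hroot] using hx
  · intro w hw
    simpa [hroot, mul_div_cancel₀ _ h2] using hw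
  · intro x _
    field_simp
    ring
  · intro w _
    field_simp
    ring

lemma sum_comp_add_div [DecidableEq F] (hφ : orderOf φ = 2) {a : F} (ha : a ≠ 0) (f : F → R) :
    ∑ x with x ≠ 0, f (x + a / x) = ∑ u, (1 + φ (u ^ 2 - 4 * a)) * f u := by
  rw [← sum_fiberwise' _ (fun x => x + a / x)]
  simp only [sum_const, nsmul_eq_mul, filter_filter, card_add_div_eq_of_orderOf_eq_two hφ ha]

end QuadraticCharacter

section GaussSum

variable {F R : Type*} [Field F] [Fintype F] [CommRing R] [IsDomain R]

lemma inv_apply_mul_gaussSum {χ : MulChar F R} (hχ : χ ≠ 1) (ψ : AddChar F R) (t : F) :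
    χ⁻¹ t * gaussSum χ ψ = ∑ y, χ y * ψ (t * y) := by
  rcases eq_or_ne t 0 with rfl | ht
  · simp [MulChar.map_zero, MulChar.sum_eq_zero_of_ne_one hχ]
  · lift t to Fˣ using ht.isUnit
    rw [← gaussSum_mulShift_eq]
    rfl

lemma gaussSum_ne_zero [CharZero R] {χ : MulChar F R} (hχ : χ ≠ 1) {ψ : AddChar F R}
    (hψ : ψ ≠ 1) : gaussSum χ ψ ≠ 0 :=
  gaussSum_ne_zero_of_nontrivial (Nat.cast_ne_zero.mpr Fintype.card_ne_zero) hχ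
    (AddChar.IsPrimitive.of_ne_one hψ)

lemma gaussSum_mul_gaussSum_inv {χ : MulChar F R} (hχ : χ ≠ 1) {ψ : AddChar F R} (hψ : ψ ≠ 1) :
    gaussSum χ ψ * gaussSum χ⁻¹ ψ = χ (-1) * Fintype.card F := by
  rw [← mul_gaussSum_inv_eq_gaussSum χ⁻¹ ψ, mul_left_comm,
    gaussSum_mul_gaussSum_eq_card hχ (AddChar.IsPrimitive.of_ne_one hψ), MulChar.inv_apply',
    inv_neg_one]

lemma sum_addChar_mul_sq {φ : MulChar F R} (hφ : orderOf φ = 2) {ψ : AddChar F R} (hψ : ψ ≠ 1)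
    {y : F} (hy : y ≠ 0) : ∑ u, ψ (y * u ^ 2) = φ y * gaussSum φ ψ := by
  have hφ_ne : φ ≠ 1 := mt orderOf_eq_one_iff.mpr (by simp [hφ])
  have hsum : ∑ t, ψ (y * t) = 0 :=
    AddChar.sum_eq_zero_of_ne_one (AddChar.IsPrimitive.of_ne_one hψ hy)
  rw [sum_comp_sq hφ (fun t => ψ (y * t))]
  simp only [add_mul, one_mul, sum_add_distrib, hsum, zero_add]
  rw [← inv_apply_mul_gaussSum hφ_ne, inv_eq_self_of_orderOf_eq_two hφ]

lemma sum_addChar_quadratic {φ : MulChar F R} (hφ : orderOf φ = 2) {ψ : AddChar F R} (hψ : ψ ≠ 1)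
    {y : F} (hy : y ≠ 0) (c : F) :
    ∑ u, ψ (y * u ^ 2 + c * u) = φ y * gaussSum φ ψ * ψ (-((c / 2) ^ 2 / y)) := by
  have h2 : (2 : F) ≠ 0 := Ring.two_ne_zero (ringChar_ne_two_of_mulChar_orderOf_eq_two hφ)
  have hcomplete (u : F) :
      y * u ^ 2 + c * u = y * (u + c / (2 * y)) ^ 2 + -((c / 2) ^ 2 / y) := by
    field_simp
    ring
  simp only [hcomplete, AddChar.map_add_eq_mul, ← sum_mul]
  rw [← sum_addChar_mul_sq hφ hψ hy]
  congr 1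
  exact Fintype.sum_equiv (Equiv.addRight (c / (2 * y))) _ _ fun u => rfl

end GaussSum

section TwistedKloosterman

variable {F R : Type*} [Field F] [Fintype F] [CommRing R]

/-- The Kloosterman sum `∑ χ(x) ψ(bx + c/x)` over `x ≠ 0`, twisted by a multiplicative character
`χ`. Since `χ 0 = 0`, the sum may be taken over the whole field. -/
def twistedKloosterman (χ : MulChar F R) (ψ : AddChar F R) (b c : F) : R :=
  ∑ x, χ x * ψ (b * x + c / x)

lemma twistedKloosterman_inv (χ : MulChar F R) (ψ : AddChar F R) (b c : F) :
    twistedKloosterman χ⁻¹ ψ b c = twistedKloosterman χ ψ c b := by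
  refine Fintype.sum_equiv (Equiv.inv F) _ _ fun x => ?_
  simp [MulChar.inv_apply', div_eq_mul_inv, add_comm]

lemma apply_mul_twistedKloosterman_mul_left (χ : MulChar F R) (ψ : AddChar F R) {t : F}
    (ht : t ≠ 0) (b c : F) :
    χ t * twistedKloosterman χ ψ (t * b) c = twistedKloosterman χ ψ b (t * c) := by
  rw [twistedKloosterman, mul_sum]
  refine Fintype.sum_equiv (Equiv.mulLeft₀ t ht) _ _ fun x => ?_
  rw [Equiv.mulLeft₀_apply, map_mul, mul_assoc, mul_div_mul_left _ _ ht]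
  ring_nf

variable [IsDomain R]

/-- The finite field analogue of Basset's integral for the Bessel function `K`. -/
lemma gaussSum_mul_sum_inv_apply_sq_sub {φ : MulChar F R} (hφ : orderOf φ = 2)
    {χ : MulChar F R} (hχ : χ ≠ 1) {ψ : AddChar F R} (hψ : ψ ≠ 1) (a c : F) :
    gaussSum χ ψ * ∑ u, χ⁻¹ (u ^ 2 - 4 * a) * ψ (c * u) =
      gaussSum φ ψ * twistedKloosterman (χ * φ) ψ (-4 * a) (-(c / 2) ^ 2) := by
  calc gaussSum χ ψ * ∑ u, χ⁻¹ (u ^ 2 - 4 * a) * ψ (c * u)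
      = ∑ u, ∑ y, χ y * ψ ((u ^ 2 - 4 * a) * y) * ψ (c * u) := by
        simp only [mul_sum, ← sum_mul, ← inv_apply_mul_gaussSum hχ]
        exact sum_congr rfl fun u _ => by ring
    _ = ∑ y, χ y * ψ (-4 * a * y) * ∑ u, ψ (y * u ^ 2 + c * u) := by
        rw [sum_comm]
        simp only [mul_sum, mul_assoc, ← AddChar.map_add_eq_mul]
        exact sum_congr rfl fun y _ => sum_congr rfl fun u _ => by ring_nf
    _ = gaussSum φ ψ * twistedKloosterman (χ * φ) ψ (-4 * a) (-(c / 2) ^ 2) := by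
        rw [twistedKloosterman, mul_sum]
        refine sum_congr rfl fun y _ => ?_
        rcases eq_or_ne y 0 with rfl | hy
        · simp [MulChar.map_zero]
        · rw [sum_addChar_quadratic hφ hψ hy, MulChar.mul_apply, neg_div, AddChar.map_add_eq_mul]
          ring

lemma sum_sq_apply_div_sub_mul [DecidableEq F] {φ : MulChar F R} (hφ : orderOf φ = 2)
    (χ : MulChar F R) (ψ : AddChar F R) {a : F} (ha : a ≠ 0) (c : F) :
    ∑ x with x ≠ 0, (χ ^ 2) (a / x - x) * ψ (c * (x + a / x)) =
      ∑ u, χ (u ^ 2 - 4 * a) * ψ (c * u) + ∑ u, (χ * φ) (u ^ 2 - 4 * a) * ψ (c * u) := by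
  have hsq {x : F} (hx : x ≠ 0) : (χ ^ 2) (a / x - x) = χ ((x + a / x) ^ 2 - 4 * a) := by
    rw [MulChar.pow_apply' χ two_ne_zero, ← map_pow]
    congr 1
    field_simp
    ring
  calc ∑ x with x ≠ 0, (χ ^ 2) (a / x - x) * ψ (c * (x + a / x))
      = ∑ x with x ≠ 0, χ ((x + a / x) ^ 2 - 4 * a) * ψ (c * (x + a / x)) :=
        sum_congr rfl fun x hx => by rw [hsq (mem_filter.mp hx).2]
    _ = ∑ u, (1 + φ (u ^ 2 - 4 * a)) * (χ (u ^ 2 - 4 * a) * ψ (c * u)) :=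
        sum_comp_add_div hφ ha fun u => χ (u ^ 2 - 4 * a) * ψ (c * u)
    _ = _ := by
        rw [← sum_add_distrib]
        exact sum_congr rfl fun u _ => by rw [MulChar.mul_apply]; ring

end TwistedKloosterman

section QuarticCharacter

variable {F R : Type*} [Field F] [CommRing R] {χ : MulChar F R}

lemma mulChar_apply_neg_four_of_orderOf_eq_four [Finite F] (hχ : orderOf χ = 4) :
    χ (-4) = 1 := by
  have := Fintype.ofFinite F
  have hcard : Fintype.card F % 4 = 1 := by
    have := hχ ▸ χ.orderOf_dvd_card_sub_one
    have := Fintype.one_lt_card (α := F)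
    omega
  obtain ⟨i, hi⟩ : IsSquare (-1 : F) := FiniteField.isSquare_neg_one_iff.mpr (by omega)
  have h2 : (2 : F) ≠ 0 := Ring.two_ne_zero <|
    ringChar_ne_two_of_mulChar_orderOf_eq_two (orderOf_sq_of_orderOf_eq_four hχ)
  have hpow : (-4 : F) = (1 + i) ^ 4 := by linear_combination (i ^ 2 + 4 * i + 5) * hi
  have hi1 : 1 + i ≠ 0 := fun h => mul_ne_zero h2 h2 (by rw [h] at hpow; linear_combination -hpow)
  rw [hpow, mulChar_apply_pow_eq_one (hχ ▸ pow_orderOf_eq_one χ) (IsUnit.mk0 _ hi1)]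

variable [Fintype F]

lemma twistedKloosterman_inv_of_orderOf_eq_four (hχ : orderOf χ = 4) (ψ : AddChar F R) (a : F)
    {j : F} (hj : j ≠ 0) :
    twistedKloosterman χ⁻¹ ψ (-4 * a) (-(j ^ 2 / 2) ^ 2) =
      twistedKloosterman χ ψ 1 (a * j ^ 4) := by
  have h2 : (2 : F) ≠ 0 := Ring.two_ne_zero <|
    ringChar_ne_two_of_mulChar_orderOf_eq_two (orderOf_sq_of_orderOf_eq_four hχ)
  set t : F := -(j ^ 2 / 2) ^ 2 with ht_def
  have ht : t ≠ 0 := neg_ne_zero.mpr (pow_ne_zero 2 (div_ne_zero (pow_ne_zero 2 hj) h2))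
  have ht_mul : -4 * t = j ^ 4 := by
    rw [ht_def]
    field_simp
    ring
  have hχt : χ t = 1 := by
    have h := mulChar_apply_pow_eq_one (hχ ▸ pow_orderOf_eq_one χ) hj.isUnit
    rwa [← ht_mul, map_mul, mulChar_apply_neg_four_of_orderOf_eq_four hχ, one_mul] at h
  calc twistedKloosterman χ⁻¹ ψ (-4 * a) t
      = χ t * twistedKloosterman χ ψ (t * 1) (-4 * a) := by
        rw [twistedKloosterman_inv, hχt, one_mul, mul_one]
    _ = twistedKloosterman χ ψ 1 (a * j ^ 4) := by
        rw [apply_mul_twistedKloosterman_mul_left χ ψ ht, ← ht_mul]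
        ring_nf

variable [IsDomain R]

lemma gaussSum_mul_sum_inv_apply_sq_sub_of_orderOf_eq_four (hχ : orderOf χ = 4)
    {ψ : AddChar F R} (hψ : ψ ≠ 1) (a : F) {j : F} (hj : j ≠ 0) :
    gaussSum χ ψ * ∑ u, χ⁻¹ (u ^ 2 - 4 * a) * ψ (j ^ 2 * u) =
      gaussSum (χ ^ 2) ψ * twistedKloosterman χ ψ 1 (a * j ^ 4) := by
  have hχ_ne : χ ≠ 1 := mt orderOf_eq_one_iff.mpr (by simp [hχ])
  rw [gaussSum_mul_sum_inv_apply_sq_sub (orderOf_sq_of_orderOf_eq_four hχ) hχ_ne hψ,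
    mul_sq_eq_inv_of_orderOf_eq_four hχ,
    twistedKloosterman_inv_of_orderOf_eq_four hχ ψ a hj]

lemma gaussSum_inv_mul_sum_apply_sq_sub_of_orderOf_eq_four (hχ : orderOf χ = 4)
    {ψ : AddChar F R} (hψ : ψ ≠ 1) {a : F} (ha : a ≠ 0) {j : F} (hj : j ≠ 0) :
    χ a * gaussSum χ⁻¹ ψ * ∑ u, χ (u ^ 2 - 4 * a) * ψ (j ^ 2 * u) =
      gaussSum (χ ^ 2) ψ * twistedKloosterman χ ψ 1 (a * j ^ 4) := by
  have hsymm : χ a * twistedKloosterman χ⁻¹ ψ 1 (a * j ^ 4) =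
      twistedKloosterman χ ψ 1 (a * j ^ 4) := by
    have h := apply_mul_twistedKloosterman_mul_left χ ψ (mul_ne_zero ha (pow_ne_zero 4 hj)) 1 1
    rwa [map_mul, mulChar_apply_pow_eq_one (hχ ▸ pow_orderOf_eq_one χ) hj.isUnit, mul_one, mul_one,
      ← twistedKloosterman_inv] at h
  have hsum := gaussSum_mul_sum_inv_apply_sq_sub_of_orderOf_eq_four
    ((orderOf_inv χ).trans hχ) hψ a hj
  rw [inv_inv, inv_pow,
    inv_eq_self_of_orderOf_eq_two (orderOf_sq_of_orderOf_eq_four hχ)] at hsum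
  rw [mul_assoc, hsum, mul_left_comm, hsymm]

end QuarticCharacter

section KatzSums

variable {F : Type} [Field F] [Fintype F] [DecidableEq F] {ψ : AddChar F ℂ} {A₄ : MulChar F ℂ}
  {a j : F}

lemma Pkatz_zero_right_of_ne_zero (hj : j ≠ 0) :
    Pkatz ψ A₄ a j 0 = (gaussSum (A₄ ^ 2) ψ)⁻¹ *
      ∑ x with x ≠ 0, (A₄ ^ 2) (a / x - x) * ψ (j ^ 2 * (x + a / x)) := by
  simp only [Pkatz, neg_zero, if_neg hj, mul_zero, add_zero, sub_zero, zero_add]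
  congr! 4
  ring

lemma Pkatz_zero_right_eq_mul_twistedKloosterman (hψ : ψ ≠ 1) (hA₄ : orderOf A₄ = 4) (ha : a ≠ 0)
    (hj : j ≠ 0) :
    Pkatz ψ A₄ a j 0 = ((gaussSum A₄ ψ)⁻¹ + (A₄ a * gaussSum A₄⁻¹ ψ)⁻¹) *
      twistedKloosterman A₄ ψ 1 (a * j ^ 4) := by
  have hA₄_sq := orderOf_sq_of_orderOf_eq_four hA₄
  have hG : gaussSum A₄ ψ ≠ 0 := gaussSum_ne_zero (mt orderOf_eq_one_iff.mpr (by simp [hA₄])) hψ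
  have hG_inv : A₄ a * gaussSum A₄⁻¹ ψ ≠ 0 := mul_ne_zero (ha.isUnit.map A₄).ne_zero
    (gaussSum_ne_zero (mt orderOf_eq_one_iff.mpr (by simp [hA₄])) hψ)
  have hG_sq : gaussSum (A₄ ^ 2) ψ ≠ 0 :=
    gaussSum_ne_zero (mt orderOf_eq_one_iff.mpr (by simp [hA₄_sq])) hψ
  rw [Pkatz_zero_right_of_ne_zero hj, sum_sq_apply_div_sub_mul hA₄_sq A₄ ψ ha,
    mul_sq_eq_inv_of_orderOf_eq_four hA₄,
    (eq_inv_mul_iff_mul_eq₀ hG).mpr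
      (gaussSum_mul_sum_inv_apply_sq_sub_of_orderOf_eq_four hA₄ hψ a hj),
    (eq_inv_mul_iff_mul_eq₀ hG_inv).mpr
      (gaussSum_inv_mul_sum_apply_sq_sub_of_orderOf_eq_four hA₄ hψ ha hj)]
  field_simp
  ring

lemma Vkatz_of_ne_zero (τ : ℂ) (hj : j ≠ 0) :
    Vkatz ψ A₄ a τ j = τ⁻¹ * twistedKloosterman A₄ ψ 1 (a * j ^ 4) := by
  rw [Vkatz, if_neg hj, twistedKloosterman]
  congr 1
  simp only [one_mul]
  refine sum_filter_of_ne fun x _ hx h0 => hx ?_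
  rw [h0, MulChar.map_zero, zero_mul]

lemma Vkatz_zero (hψ : ψ ≠ 1) (hA₄ : A₄ ≠ 1) {τ : ℂ}
    (hτ : τ ^ 2 = (Fintype.card F : ℂ) * A₄ (-a)) (hτ0 : τ ≠ 0) :
    Vkatz ψ A₄ a τ 0 = τ * ((gaussSum A₄ ψ)⁻¹ + (A₄ a * gaussSum A₄⁻¹ ψ)⁻¹) := by
  have hτ_sq : τ ^ 2 = gaussSum A₄ ψ * (A₄ a * gaussSum A₄⁻¹ ψ) := by
    rw [mul_left_comm, gaussSum_mul_gaussSum_inv hA₄ hψ, hτ, neg_eq_neg_one_mul a, map_mul]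
    ring
  have hτ_div : τ / (A₄ a * gaussSum A₄⁻¹ ψ) = gaussSum A₄ ψ / τ := by
    rw [div_eq_div_iff (right_ne_zero_of_mul (hτ_sq ▸ pow_ne_zero 2 hτ0)) hτ0, ← sq, hτ_sq]
  rw [Vkatz, if_pos rfl, mul_add, ← div_eq_mul_inv, ← div_eq_mul_inv, hτ_div, add_comm]

end KatzSums

/-- `P(j,0) = V(0)·V(j)` for all nonzero `j`. -/
theorem P_j_zero_eq_V_zero_mul_V_j
    (F : Type) [Field F] [Fintype F] [DecidableEq F]
    (hq : Fintype.card F % 4 = 1)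
    (ψ : AddChar F ℂ) (hψ : ψ ≠ 1)
    (A₄ : MulChar F ℂ) (hA₄ : orderOf A₄ = 4)
    (a : F) (ha : a ≠ 0)
    (τ : ℂ) (hτ : τ ^ 2 = (Fintype.card F : ℂ) * A₄ (-a)) :
    ∀ j : F, j ≠ 0 → Pkatz ψ A₄ a j 0 = Vkatz ψ A₄ a τ 0 * Vkatz ψ A₄ a τ j := by
  intro j hj
  have hA₄_ne : A₄ ≠ 1 := mt orderOf_eq_one_iff.mpr (by simp [hA₄])
  have hτ_ne : τ ≠ 0 := by
    rw [← sq_eq_zero_iff.ne, hτ]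
    exact mul_ne_zero (Nat.cast_ne_zero.mpr Fintype.card_ne_zero)
      ((neg_ne_zero.mpr ha).isUnit.map A₄).ne_zero
  rw [Pkatz_zero_right_eq_mul_twistedKloosterman hψ hA₄ ha hj, Vkatz_zero hψ hA₄_ne hτ hτ_ne,
    Vkatz_of_ne_zero τ hj]
  field_simp
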